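/- Let F be a field with char F ≠ 2 and let H be the Highwater algebra over F. For each i ∈ ℤ, the F-linear map τ_i : H → H determined by τ_i(a_j) = a_{2i−j} for all j ∈ ℤ and τ_i(s_j) = s_j for all j ≥ 1 is an algebra automorphism of H satisfying τ_i ∘ τ_i = id. -/

import Mathlib

/- STATEMENT 6: the map τ_i : a_j ↦ a_{2i-j}, s_j ↦ s_j is an algebra automorphism\nof the Highwater algebra with τ_i ∘ τ_i = id. -/

/-- The underlying vector space of the Highwater algebra: formal `F`-linear combinations
of basis elements `a_i` (`i : ℤ`, encoded `Sum.inl i`) and `s_j` (`j ≥ 1`, encoded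
`Sum.inr (j - 1)`). -/
abbrev HW (F : Type*) [Field F] := (ℤ ⊕ ℕ) →₀ F

variable (F : Type*) [Field F]

/-- The axis `a_i` of the Highwater algebra. -/
noncomputable def hwa (i : ℤ) : HW F := Finsupp.single (Sum.inl i) 1

/-- The element `s_j` of the Highwater algebra (`s_0 = 0`). -/
noncomputable def hws : ℕ → HW F
  | 0 => 0
  | j + 1 => Finsupp.single (Sum.inr j) 1

/-- Product of two basis elements of the Highwater algebra:
`a_i · a_k = (1/2)(a_i + a_k) + s_{|i-k|}`,
`a_i · s_j = -(3/4) a_i + (3/8)(a_{i-j} + a_{i+j}) + (3/2) s_j`,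
`s_j · s_k = (3/4)(s_j + s_k) - (3/8)(s_{|j-k|} + s_{j+k})`. -/
noncomputable def hwBM : ℤ ⊕ ℕ → ℤ ⊕ ℕ → HW F
  | Sum.inl i, Sum.inl k => ((1 : F) / 2) • (hwa F i + hwa F k) + hws F (i - k).natAbs
  | Sum.inl i, Sum.inr j =>
      (-(3 : F) / 4) • hwa F i
        + ((3 : F) / 8) • (hwa F (i - ((j : ℤ) + 1)) + hwa F (i + ((j : ℤ) + 1)))
        + ((3 : F) / 2) • hws F (j + 1)
  | Sum.inr j, Sum.inl i =>
      (-(3 : F) / 4) • hwa F i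
        + ((3 : F) / 8) • (hwa F (i - ((j : ℤ) + 1)) + hwa F (i + ((j : ℤ) + 1)))
        + ((3 : F) / 2) • hws F (j + 1)
  | Sum.inr j, Sum.inr k =>
      ((3 : F) / 4) • (hws F (j + 1) + hws F (k + 1))
        - ((3 : F) / 8) • (hws F ((j : ℤ) - (k : ℤ)).natAbs + hws F (j + k + 2))

/-- The multiplication of the Highwater algebra: the bilinear extension of `hwBM`. -/
noncomputable def hwMul (x y : HW F) : HW F :=
  x.sum fun i ci => y.sum fun j cj => (ci * cj) • hwBM F i j

/-- The involution `a_j ↦ a_{2i-j}`, `s_j ↦ s_j` on basis indices. -/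
def hwReflect (i : ℤ) : ℤ ⊕ ℕ → ℤ ⊕ ℕ := Sum.map (fun j => 2 * i - j) id

theorem hwReflect_involutive (i : ℤ) : Function.Involutive (hwReflect i) := by
  rintro (j | j) <;> simp [hwReflect]

/-- The Miyamoto involution `τ_i` as a linear map. -/
noncomputable def hwTau (i : ℤ) : HW F →ₗ[F] HW F := Finsupp.lmapDomain F F (hwReflect i)

theorem hwTau_hwa (i j : ℤ) : hwTau F i (hwa F j) = hwa F (2 * i - j) := by
  simp [hwTau, hwa, hwReflect]

theorem hwTau_hws (i : ℤ) (j : ℕ) : hwTau F i (hws F j) = hws F j := by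
  cases j <;> simp [hwTau, hws, hwReflect]

theorem hwTau_hwTau (i : ℤ) (x : HW F) : hwTau F i (hwTau F i x) = x := by
  simp [hwTau, ← Finsupp.mapDomain_comp, (hwReflect_involutive i).comp_self]

theorem hwTau_hwBM (i : ℤ) (p q : ℤ ⊕ ℕ) :
    hwTau F i (hwBM F p q) = hwBM F (hwReflect i p) (hwReflect i q) := by
  have reflect_sub (j k : ℤ) : 2 * i - (j - k) = 2 * i - j + k := by ring
  have reflect_add (j k : ℤ) : 2 * i - (j + k) = 2 * i - j - k := by ring
  rcases p with p | p <;> rcases q with q | q <;>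
    simp only [hwBM, hwReflect, Sum.map_inl, Sum.map_inr, id_eq, map_add, map_sub, map_smul,
      hwTau_hwa, hwTau_hws, reflect_sub, reflect_add]
  · rw [show (2 * i - p - (2 * i - q)).natAbs = (p - q).natAbs by omega]
  · rw [add_comm (hwa F (2 * i - p + _))]
  · rw [add_comm (hwa F (2 * i - q + _))]

theorem hwTau_hwMul (i : ℤ) (x y : HW F) :
    hwTau F i (hwMul F x y) = hwMul F (hwTau F i x) (hwTau F i y) := by
  have hx (z : HW F) : hwTau F i z = Finsupp.mapDomain (hwReflect i) z := rfl
  rw [hx x, hx y, hwMul, hwMul,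
    Finsupp.sum_mapDomain_index_inj (hwReflect_involutive i).injective]
  simp only [Finsupp.sum_mapDomain_index_inj (hwReflect_involutive i).injective,
    map_finsuppSum, map_smul, hwTau_hwBM]

theorem highwater_miyamoto_involution (h2 : ringChar F ≠ 2) (i : ℤ) :
    ∃ T : HW F →ₗ[F] HW F,
      (∀ j : ℤ, T (hwa F j) = hwa F (2 * i - j)) ∧
      (∀ j : ℕ, 1 ≤ j → T (hws F j) = hws F j) ∧
      (∀ x y : HW F, T (hwMul F x y) = hwMul F (T x) (T y)) ∧
      (∀ x : HW F, T (T x) = x) := by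
  exact ⟨hwTau F i, hwTau_hwa F i, fun j _ => hwTau_hws F i j, hwTau_hwMul F i, hwTau_hwTau F i⟩
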